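/- Constant-cost conditional updates: let D₁,…,D_k ∈ {ℕ, Bool}, let p, q ≥ 0, and consider good F-terms with variables among x₁ : D₁, …, x_k : D_k: terms ρ₁,…,ρ_{p+q} denoting r_s = ⟦ρ_s⟧ : D₁×⋯×D_k → Bool, terms φ_{i,j} (1 ≤ i ≤ p, 1 ≤ j ≤ k) denoting f_{i,j} = ⟦φ_{i,j}⟧ : D₁×⋯×D_k → D_j, and terms γ₁,…,γ_q denoting g_ℓ = ⟦γ_ℓ⟧ : D₁×⋯×D_k → E_ℓ (E_ℓ ∈ {ℕ, Bool}). Then there exist natural numbers K_min and L_min such that for all K ≥ K_min and L ≥ L_min there is a Λ_F-term θ with the property: for every (a₁,…,a_k) ∈ D₁×⋯×D_k and every s ∈ {1,…,p+q}, if r_s(a₁,…,a_k) = True and r_t(a₁,…,a_k) = False for all t < s, then the leftmost reduction strategy takes θ⌜a₁⌝⋯⌜a_k⌝ to θ⌜f_{s,1}(a₁,…,a_k)⌝⋯⌜f_{s,k}(a₁,…,a_k)⌝ if s ≤ p, and to ⌜g_ℓ(a₁,…,a_k)⌝ if s = p+ℓ; in all cases this sequence of reductions consists of exactly K β-reductions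 and exactly L F-reductions. -/

import Mathlib

/-!
F-redexes are pairwise disjoint (encodings are F-normal, and a constant with too few arguments is
not a redex), so F-reduction has the one-step diamond property (`LamF.FStep.diamond`). Hence all
F-reductions of a term to F-normal form have the same length, and F-steps may be counted in any
order (`LamF.FSteps.lSeq`).

The body of `θ` is a decision list `I r₁ B₁ (I r₂ B₂ (…))` over the good terms, in which each branch
is preceded by enough identities to make up for the tests that it skips (`LamF.lSeq_sel`). Since the
strategy gives priority to F-redexes, the good terms of all branches are evaluated while the
variables `x₁, …, x_k` are instantiated one after the other. To describe the intermediate terms,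
`Good.pe j a t` is the partial evaluation of `t` once the first `j` variables have received the
values `a`: every subterm without uninstantiated variables has been replaced by the encoding of its
value. Passing from stage `j` to stage `j + 1` takes a number `Good.cnt j t` of F-steps that depends
only on the shape of `t` (`Good.fSteps_pe`). Stage `0` does not depend on `a` and is F-normal, so it
can be used inside `θ`.

Recursion is obtained from `θ = W W` with `W = λw. I (… (I (P (λx₁ … x_k. body))))`, where `w w`
stands for `θ` in the body (`Tpl.exists_rec`). The identities adjust the number of β-steps. The term
`P = (λv. (λu. I) (ω (… (ω v)))) ⌜b⌝`, with the other arguments of `ω` given by values of the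
constants `ν`, takes two β-steps and any prescribed number of F-steps to become `I`; this adjusts
the number of F-steps.
-/

/-- The two datatypes: natural numbers and Booleans. -/
inductive Dt : Type
  | nat
  | bool
  deriving DecidableEq

def Dt.carrier : Dt → Type
  | .nat => ℕ
  | .bool => Bool

instance Dt.decEqCarrier : (D : Dt) → DecidableEq D.carrier
  | .nat => inferInstanceAs (DecidableEq ℕ)
  | .bool => inferInstanceAs (DecidableEq Bool)

/-- A family `F` of typed functions over the datatypes. -/
structure Sig where
  Sym : Type
  arity : Sym → ℕ
  dom : (f : Sym) → Fin (arity f) → Dt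
  cod : Sym → Dt
  interp : (f : Sym) → ((i : Fin (arity f)) → (dom f i).carrier) → (cod f).carrier

/-- Terms of the `Λ_F`-calculus (de Bruijn representation, so α-equivalence is equality). -/
inductive LamF (S : Sig) : Type
  | var : ℕ → LamF S
  | const : S.Sym → LamF S
  | app : LamF S → LamF S → LamF S
  | lam : LamF S → LamF S

namespace LamF

variable {S : Sig}

def lift (d : ℕ) : LamF S → LamF S
  | var n => if n < d then var n else var (n + 1)
  | const c => const c
  | app M N => app (lift d M) (lift d N)
  | lam M => lam (lift (d + 1) M)

def subst : LamF S → ℕ → LamF S → LamF S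
  | var n, k, N => if n = k then N else if k < n then var (n - 1) else var n
  | const c, _, _ => const c
  | app A B, k, N => app (subst A k N) (subst B k N)
  | lam A, k, N => lam (subst A (k + 1) (lift 0 N))

def apps : LamF S → List (LamF S) → LamF S := List.foldl app

def Ktrue : LamF S := lam (lam (var 1))
def Kfalse : LamF S := lam (lam (var 0))

def num : ℕ → LamF S
  | 0 => lam (app (app (var 0) Ktrue) Kfalse)
  | n + 1 => lam (app (app (var 0) Kfalse) (num n))

/-- Encoding of an element of a datatype as a `Λ_F`-term. -/
def enc : (D : Dt) → D.carrier → LamF S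
  | .nat, n => num n
  | .bool, b => cond b Ktrue Kfalse

/-- One-step β-reduction. -/
inductive BStep : LamF S → LamF S → Prop
  | beta (M N : LamF S) : BStep (app (lam M) N) (subst M 0 N)
  | appL {M M' : LamF S} (N : LamF S) : BStep M M' → BStep (app M N) (app M' N)
  | appR (M : LamF S) {N N' : LamF S} : BStep N N' → BStep (app M N) (app M N')
  | abs {M M' : LamF S} : BStep M M' → BStep (lam M) (lam M')

/-- The `F`-axioms: `c_f ⌜a₁⌝ ⋯ ⌜a_k⌝ → ⌜f(a₁,…,a_k)⌝` (root redexes). -/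
inductive FAx : LamF S → LamF S → Prop
  | intro (f : S.Sym) (a : (i : Fin (S.arity f)) → (S.dom f i).carrier) :
      FAx (apps (const f) (List.ofFn fun i => enc (S.dom f i) (a i)))
          (enc (S.cod f) (S.interp f a))

/-- One-step `F`-reduction: contextual closure of the `F`-axioms. -/
inductive FStep : LamF S → LamF S → Prop
  | ax {M N : LamF S} : FAx M N → FStep M N
  | appL {M M' : LamF S} (N : LamF S) : FStep M M' → FStep (app M N) (app M' N)
  | appR (M : LamF S) {N N' : LamF S} : FStep N N' → FStep (app M N) (app M N')
  | abs {M M' : LamF S} : FStep M M' → FStep (lam M) (lam M')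

def BStar : LamF S → LamF S → Prop := Relation.ReflTransGen BStep
def FStar : LamF S → LamF S → Prop := Relation.ReflTransGen FStep

/-- One-step reduction of the `Λ_F`-calculus: β or F. -/
def Step (M N : LamF S) : Prop := BStep M N ∨ FStep M N

def Star : LamF S → LamF S → Prop := Relation.ReflTransGen Step

/-- `M` is an `F`-redex. -/
def IsFRedex (M : LamF S) : Prop := ∃ N, FAx M N

/-- `M` contains an `F`-redex (equivalently: some `F`-step applies to `M`). -/
def HasF (M : LamF S) : Prop := ∃ N, FStep M N

def size : LamF S → ℕ
  | var _ => 1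
  | const _ => 1
  | app A B => size A + size B + 1
  | lam A => size A + 1
def IsAbs : LamF S → Prop
  | lam _ => True
  | _ => False

/-- `M` is β-normal. -/
def BNormal (M : LamF S) : Prop := ∀ N, ¬ BStep M N

/-- Contraction of the leftmost `F`-redex. -/
inductive LFStep : LamF S → LamF S → Prop
  | ax {M N : LamF S} : FAx M N → LFStep M N
  | abs {A A' : LamF S} : LFStep A A' → LFStep (lam A) (lam A')
  | appL {A A' : LamF S} (B : LamF S) :
      ¬ IsFRedex (app A B) → LFStep A A' → LFStep (app A B) (app A' B)
  | appR (A : LamF S) {B B' : LamF S} :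
      ¬ IsFRedex (app A B) → ¬ HasF A → LFStep B B' → LFStep (app A B) (app A B')

/-- Contraction of the leftmost β-redex. -/
inductive LBStep : LamF S → LamF S → Prop
  | beta (A B : LamF S) : LBStep (app (lam A) B) (subst A 0 B)
  | abs {A A' : LamF S} : LBStep A A' → LBStep (lam A) (lam A')
  | appL {A A' : LamF S} (B : LamF S) : ¬ IsAbs A → LBStep A A' → LBStep (app A B) (app A' B)
  | appR (A : LamF S) {B B' : LamF S} :
      ¬ IsAbs A → BNormal A → LBStep B B' → LBStep (app A B) (app A B')

/-- `LSeq M b f N`: the leftmost reduction strategy of `Λ_F` (leftmost `F`-redex if any,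
otherwise leftmost β-redex) takes `M` to `N` using exactly `b` β-reductions and
`f` `F`-reductions. -/
inductive LSeq : LamF S → ℕ → ℕ → LamF S → Prop
  | refl (M : LamF S) : LSeq M 0 0 M
  | fstep {M P N : LamF S} {b f : ℕ} : LFStep M P → LSeq P b f N → LSeq M b (f + 1) N
  | bstep {M P N : LamF S} {b f : ℕ} : ¬ HasF M → LBStep M P → LSeq P b f N → LSeq M (b + 1) f N
end LamF

/-- Good `F`-terms with variables `x₁ : Γ 0, …, x_k : Γ (k-1)`, of type `D`:
abstraction-free, each constant fully applied, type-correctly. -/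
inductive Good (S : Sig) (k : ℕ) (Γ : Fin k → Dt) : Dt → Type
  | var (i : Fin k) : Good S k Γ (Γ i)
  | node (f : S.Sym) (args : (i : Fin (S.arity f)) → Good S k Γ (S.dom f i)) :
      Good S k Γ (S.cod f)

namespace Good

variable {S : Sig} {k : ℕ} {Γ : Fin k → Dt}

/-- The function denoted by a good `F`-term (composition of the functions of `F`). -/
def eval : {D : Dt} → Good S k Γ D → ((i : Fin k) → (Γ i).carrier) → D.carrier
  | _, .var i, a => a i
  | _, .node f args, a => S.interp f fun i => (args i).eval a

/-- `t[⌜a₁⌝/x₁, …, ⌜a_k⌝/x_k]` : the closed `Λ_F`-term obtained by substituting the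
encodings of the `a i` for the variables of `t`. -/
def substEnc : {D : Dt} → Good S k Γ D → ((i : Fin k) → (Γ i).carrier) → LamF S
  | _, .var i, a => LamF.enc (Γ i) (a i)
  | _, .node f args, a => LamF.apps (.const f) (List.ofFn fun i => (args i).substEnc a)

/-- Number of occurrences of constants `c_f` in a good `F`-term. -/
def nconsts : {D : Dt} → Good S k Γ D → ℕ
  | _, .var _ => 0
  | _, .node _ args => 1 + ∑ i, (args i).nconsts

end Good

/-- `F` contains a function ω : B₁×⋯×B_ℓ → B_i (ℓ ≥ 1, 1 ≤ i ≤ ℓ) and, for each j,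
a constant ν_j ∈ B_j. -/
def Sig.PadAssump (S : Sig) : Prop :=
  ∃ w : S.Sym, 1 ≤ S.arity w ∧ (∃ i : Fin (S.arity w), S.cod w = S.dom w i) ∧
    ∀ j : Fin (S.arity w), ∃ c : S.Sym, S.arity c = 0 ∧ S.cod c = S.dom w j

namespace LamF

variable {S : Sig}

/-! ### Spines and closed terms -/

theorem apps_nil (M : LamF S) : apps M [] = M := rfl

theorem apps_cons (M A : LamF S) (L : List (LamF S)) : apps M (A :: L) = apps (app M A) L := rfl

theorem apps_concat (M A : LamF S) (L : List (LamF S)) :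
    apps M (L ++ [A]) = app (apps M L) A := by
  simp [apps, List.foldl_append]

/-- The head of the application spine of `M` is a constant. -/
def HeadConst : LamF S → Prop
  | const _ => True
  | app A _ => HeadConst A
  | _ => False

/-- The head of the application spine of a term. -/
def hd : LamF S → LamF S
  | app A _ => hd A
  | M => M

/-- The arguments along the application spine of a term. -/
def spArgs : LamF S → List (LamF S)
  | app A B => spArgs A ++ [B]
  | _ => []

theorem headConst_apps (M : LamF S) (L : List (LamF S)) :
    HeadConst (apps M L) ↔ HeadConst M := by
  induction L generalizing M with
  | nil => rfl
  | cons A L ih => rw [apps_cons, ih]; rfl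

theorem spArgs_apps (M : LamF S) (L : List (LamF S)) :
    spArgs (apps M L) = spArgs M ++ L := by
  induction L generalizing M with
  | nil => simp [apps_nil]
  | cons A L ih => rw [apps_cons, ih]; simp [spArgs]

theorem hd_apps (M : LamF S) (L : List (LamF S)) : hd (apps M L) = hd M := by
  induction L generalizing M with
  | nil => rfl
  | cons A L ih => rw [apps_cons, ih]; rfl

theorem apps_const_inj {f g : S.Sym} {L L' : List (LamF S)}
    (h : apps (const f) L = apps (const g) L') : f = g ∧ L = L' := by
  have h1 := congrArg hd h
  have h2 := congrArg spArgs h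
  rw [hd_apps, hd_apps] at h1
  rw [spArgs_apps, spArgs_apps] at h2
  exact ⟨by simpa [hd] using h1, by simpa [spArgs] using h2⟩

/-- All free de Bruijn indices of the term are below `d`. -/
def Clo : ℕ → LamF S → Prop
  | d, var n => n < d
  | _, const _ => True
  | d, app A B => Clo d A ∧ Clo d B
  | d, lam A => Clo (d + 1) A

theorem Clo.mono {M : LamF S} {d e : ℕ} (h : Clo d M) (hde : d ≤ e) : Clo e M := by
  induction M generalizing d e with
  | var n => exact lt_of_lt_of_le h hde
  | const c => trivial
  | app A B ihA ihB => exact ⟨ihA h.1 hde, ihB h.2 hde⟩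
  | lam A ih => exact ih (d := d + 1) h (by omega)

theorem Clo.lift_eq {M : LamF S} {d : ℕ} (h : Clo d M) : lift d M = M := by
  induction M generalizing d with
  | var n => have h' : n < d := h; simp [lift, h']
  | const c => rfl
  | app A B ihA ihB => simp [lift, ihA h.1, ihB h.2]
  | lam A ih => simp only [lift]; rw [ih (d := d + 1) h]

theorem Clo.subst_eq {M N : LamF S} {d : ℕ} (h : Clo d M) : subst M d N = M := by
  induction M generalizing d N with
  | var n =>
    have h' : n < d := h
    simp only [subst]
    rw [if_neg (by omega), if_neg (by omega)]
  | const c => rfl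
  | app A B ihA ihB => simp [subst, ihA h.1, ihB h.2]
  | lam A ih => simp only [subst]; rw [ih (d := d + 1) h]

theorem clo_apps {d : ℕ} {M : LamF S} {L : List (LamF S)} (hM : Clo d M)
    (hL : ∀ A ∈ L, Clo d A) : Clo d (apps M L) := by
  induction L generalizing M with
  | nil => exact hM
  | cons A L ih =>
    exact ih ⟨hM, hL A (by simp)⟩ (fun B hB => hL B (by simp [hB]))

theorem subst_apps (M N : LamF S) (L : List (LamF S)) (d : ℕ) :
    subst (apps M L) d N = apps (subst M d N) (L.map fun A => subst A d N) := by
  induction L generalizing M with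
  | nil => rfl
  | cons A L ih => rw [apps_cons, ih]; rfl

/-- `n`-fold abstraction. -/
def lams : ℕ → LamF S → LamF S
  | 0, M => M
  | n + 1, M => lam (lams n M)

theorem subst_lams {N : LamF S} (hN : Clo 0 N) (n d : ℕ) (M : LamF S) :
    subst (lams n M) d N = lams n (subst M (d + n) N) := by
  induction n generalizing d with
  | zero => rfl
  | succ n ih =>
    simp only [lams, subst, hN.lift_eq]
    rw [ih, Nat.add_right_comm, Nat.add_assoc]

theorem clo_lams {n d : ℕ} {M : LamF S} (h : Clo (d + n) M) : Clo d (lams n M) := by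
  induction n generalizing d with
  | zero => exact h
  | succ n ih => exact ih (d := d + 1) (by rwa [Nat.add_right_comm, Nat.add_assoc])

/-! ### Encodings -/

theorem clo_num (n : ℕ) : Clo 0 (num n : LamF S) := by
  induction n with
  | zero => simp [num, Clo, Ktrue, Kfalse]
  | succ n ih => exact ⟨by simp [Clo, Kfalse], ih.mono (by omega)⟩

theorem clo_enc (D : Dt) (a : D.carrier) : Clo 0 (enc D a : LamF S) := by
  cases D with
  | nat => exact clo_num a
  | bool => cases a <;> simp [enc, Clo, Ktrue, Kfalse]

theorem isAbs_enc (D : Dt) (a : D.carrier) : IsAbs (enc D a : LamF S) := by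
  cases D with
  | nat => exact (show ∀ n : ℕ, IsAbs (num n : LamF S) from fun n => by cases n <;> trivial) a
  | bool => cases a <;> trivial

theorem num_inj {m n : ℕ} (h : (num m : LamF S) = num n) : m = n := by
  induction m generalizing n with
  | zero =>
    cases n with
    | zero => rfl
    | succ n => simp [num, Ktrue, Kfalse] at h
  | succ m ih =>
    cases n with
    | zero => simp [num, Ktrue, Kfalse] at h
    | succ n => rw [ih (n := n) (by simpa [num] using h)]

theorem enc_inj {D : Dt} {a b : D.carrier} (h : (enc D a : LamF S) = enc D b) : a = b := by
  cases D with
  | nat => exact num_inj (S := S) h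
  | bool =>
    cases a <;> cases b <;> first | rfl | (simp [enc, Ktrue, Kfalse] at h)

/-! ### Confluence and length of F-reduction -/

/-- `M` is F-normal. -/
def NF (M : LamF S) : Prop := ¬ HasF M

theorem FAx.headConst {M N : LamF S} (h : FAx M N) : HeadConst M := by
  cases h; rw [headConst_apps]; trivial

theorem nf_var (n : ℕ) : NF (var n : LamF S) := by
  rintro ⟨N, h⟩
  cases h with
  | ax h => exact h.headConst

theorem nf_lam {A : LamF S} (hA : NF A) : NF (lam A) := by
  rintro ⟨N, h⟩
  cases h with
  | ax h => exact h.headConst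
  | abs h => exact hA ⟨_, h⟩

theorem nf_app {A B : LamF S} (hA : NF A) (hB : NF B) (hc : ¬ HeadConst A) :
    NF (app A B) := by
  rintro ⟨N, h⟩
  cases h with
  | ax h => exact hc h.headConst
  | appL _ h => exact hA ⟨_, h⟩
  | appR _ h => exact hB ⟨_, h⟩

theorem nf_apps {A : LamF S} {L : List (LamF S)} (hA : NF A) (hL : ∀ B ∈ L, NF B)
    (hc : ¬ HeadConst A) : NF (apps A L) := by
  induction L generalizing A with
  | nil => exact hA
  | cons B L ih =>
    exact ih (nf_app hA (hL B (by simp)) hc) (fun C hC => hL C (by simp [hC])) hc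

theorem nf_lams {n : ℕ} {A : LamF S} (hA : NF A) : NF (lams n A) := by
  induction n with
  | zero => exact hA
  | succ n ih => exact nf_lam ih

theorem nf_Ktrue : NF (Ktrue : LamF S) := nf_lam (nf_lam (nf_var _))
theorem nf_Kfalse : NF (Kfalse : LamF S) := nf_lam (nf_lam (nf_var _))

theorem nf_num (n : ℕ) : NF (num n : LamF S) := by
  induction n with
  | zero => exact nf_lam (nf_app (nf_app (nf_var _) nf_Ktrue id) nf_Kfalse id)
  | succ n ih => exact nf_lam (nf_app (nf_app (nf_var _) nf_Kfalse id) ih id)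

theorem nf_enc (D : Dt) (a : D.carrier) : NF (enc D a : LamF S) := by
  cases D with
  | nat => exact nf_num a
  | bool => cases a; exacts [nf_Kfalse, nf_Ktrue]

theorem FAx.inv {f : S.Sym} {L : List (LamF S)} {N : LamF S} (h : FAx (apps (const f) L) N) :
    ∃ a : (i : Fin (S.arity f)) → (S.dom f i).carrier,
      L = List.ofFn (fun i => enc (S.dom f i) (a i)) ∧ N = enc (S.cod f) (S.interp f a) := by
  generalize hM : apps (const f) L = M at h
  cases h with
  | intro g a =>
    obtain ⟨rfl, h2⟩ := apps_const_inj hM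
    exact ⟨a, h2, rfl⟩

theorem FAx.det {M N P : LamF S} (h : FAx M N) (h' : FAx M P) : P = N := by
  cases h with
  | intro f a =>
    obtain ⟨b, hb, rfl⟩ := h'.inv
    have hab : b = a := by
      funext i
      exact enc_inj (S := S) (congrFun (List.ofFn_injective hb) i).symm
    rw [hab]

/-- A constant with at most arity-many arguments can only be reduced at the root or inside an
argument: a proper prefix of the spine is never an F-redex. -/
theorem FStep.apps_const {f : S.Sym} {L : List (LamF S)} (hL : L.length ≤ S.arity f)
    {N : LamF S} (h : FStep (apps (const f) L) N) :
    FAx (apps (const f) L) N ∨ ∃ A ∈ L, HasF A := by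
  induction L using List.reverseRecOn generalizing N with
  | nil =>
    cases h with
    | ax h => exact Or.inl h
  | append_singleton L A ih =>
    rw [List.length_append, List.length_singleton] at hL
    rw [apps_concat] at h ⊢
    cases h with
    | ax h => exact Or.inl h
    | appL _ h =>
      rcases ih (by omega) h with h | ⟨B, hB, h⟩
      · obtain ⟨a, ha, -⟩ := h.inv
        rw [ha, List.length_ofFn] at hL
        omega
      · exact Or.inr ⟨B, by simp [hB], h⟩
    | appR _ h => exact Or.inr ⟨A, by simp, _, h⟩

/-- F-redexes contain no further F-redexes. -/
theorem FAx.unique {M N P : LamF S} (h : FAx M N) (h' : FStep M P) : P = N := by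
  have h0 := h
  cases h with
  | intro f a =>
    rcases FStep.apps_const (by simp) h' with h' | ⟨A, hA, h'⟩
    · exact h0.det h'
    · obtain ⟨i, rfl⟩ := (List.mem_ofFn' _ _).1 hA
      exact absurd h' (nf_enc _ _)

/-- F-redexes being pairwise disjoint, F-reduction has the one-step diamond property. -/
theorem FStep.diamond {M P Q : LamF S} (h : FStep M P) (h' : FStep M Q) :
    P = Q ∨ ∃ R, FStep P R ∧ FStep Q R := by
  induction h generalizing Q with
  | ax h => exact Or.inl (h.unique h').symm
  | @appL A A' B h ih =>
    cases h' with
    | ax h' => exact Or.inl (h'.unique (.appL _ h))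
    | appL _ h' =>
      rcases ih h' with rfl | ⟨R, h1, h2⟩
      · exact Or.inl rfl
      · exact Or.inr ⟨_, .appL _ h1, .appL _ h2⟩
    | appR _ h' => exact Or.inr ⟨_, .appR _ h', .appL _ h⟩
  | @appR A B B' h ih =>
    cases h' with
    | ax h' => exact Or.inl (h'.unique (.appR _ h))
    | appR _ h' =>
      rcases ih h' with rfl | ⟨R, h1, h2⟩
      · exact Or.inl rfl
      · exact Or.inr ⟨_, .appR _ h1, .appR _ h2⟩
    | appL _ h' => exact Or.inr ⟨_, .appL _ h', .appR _ h⟩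
  | abs h ih =>
    cases h' with
    | ax h' => exact Or.inl (h'.unique (.abs h))
    | abs h' =>
      rcases ih h' with rfl | ⟨R, h1, h2⟩
      · exact Or.inl rfl
      · exact Or.inr ⟨_, .abs h1, .abs h2⟩

theorem LFStep.fStep {M N : LamF S} (h : LFStep M N) : FStep M N := by
  induction h with
  | ax h => exact .ax h
  | abs _ ih => exact .abs ih
  | appL _ _ _ ih => exact .appL _ ih
  | appR _ _ _ _ ih => exact .appR _ ih

theorem HasF.exists_lfStep {M : LamF S} (h : HasF M) : ∃ N, LFStep M N := by
  by_cases hr : IsFRedex M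
  · obtain ⟨N, hN⟩ := hr
    exact ⟨N, .ax hN⟩
  induction M with
  | var n => exact absurd h (nf_var n)
  | const c =>
    obtain ⟨N, h⟩ := h
    cases h with
    | ax h => exact absurd ⟨_, h⟩ hr
  | lam A ih =>
    have hA : HasF A := by
      obtain ⟨N, h⟩ := h
      cases h with
      | ax h => exact absurd ⟨_, h⟩ hr
      | abs h => exact ⟨_, h⟩
    by_cases hrA : IsFRedex A
    · obtain ⟨N, hN⟩ := hrA
      exact ⟨_, .abs (.ax hN)⟩
    · obtain ⟨N, hN⟩ := ih hA hrA
      exact ⟨_, .abs hN⟩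
  | app A B ihA ihB =>
    by_cases hA : HasF A
    · by_cases hrA : IsFRedex A
      · obtain ⟨N, hN⟩ := hrA
        exact ⟨_, .appL _ hr (.ax hN)⟩
      · obtain ⟨N, hN⟩ := ihA hA hrA
        exact ⟨_, .appL _ hr hN⟩
    · have hB : HasF B := by
        obtain ⟨N, h⟩ := h
        cases h with
        | ax h => exact absurd ⟨_, h⟩ hr
        | appL _ h => exact absurd ⟨_, h⟩ hA
        | appR _ h => exact ⟨_, h⟩
      by_cases hrB : IsFRedex B
      · obtain ⟨N, hN⟩ := hrB
        exact ⟨_, .appR _ hr hA (.ax hN)⟩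
      · obtain ⟨N, hN⟩ := ihB hB hrB
        exact ⟨_, .appR _ hr hA hN⟩

/-- Exactly `n` F-steps, at arbitrary positions, lead from one term to the other. -/
def FSteps : ℕ → LamF S → LamF S → Prop
  | 0, M, N => M = N
  | n + 1, M, N => ∃ P, FStep M P ∧ FSteps n P N

theorem FSteps.trans {m n : ℕ} {M N P : LamF S} (h : FSteps m M N) (h' : FSteps n N P) :
    FSteps (m + n) M P := by
  induction m generalizing M with
  | zero =>
    cases (show M = N from h)
    rwa [Nat.zero_add]
  | succ m ih =>
    obtain ⟨Q, h1, h2⟩ := h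
    rw [Nat.add_right_comm]
    exact ⟨Q, h1, ih h2⟩

/-- F-steps can be carried out inside any context `C` that is compatible with single steps. -/
theorem FSteps.congr {n : ℕ} {M N : LamF S} (C : LamF S → LamF S)
    (hC : ∀ A B, FStep A B → FStep (C A) (C B)) (h : FSteps n M N) :
    FSteps n (C M) (C N) := by
  induction n generalizing M with
  | zero => exact congrArg C h
  | succ n ih =>
    obtain ⟨Q, h1, h2⟩ := h
    exact ⟨_, hC _ _ h1, ih h2⟩

theorem FStep.apps_left {M N : LamF S} (L : List (LamF S)) (h : FStep M N) :
    FStep (apps M L) (apps N L) := by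
  induction L generalizing M N with
  | nil => exact h
  | cons A L ih => exact ih (.appL _ h)

theorem FStep.lams {M N : LamF S} (n : ℕ) (h : FStep M N) :
    FStep (lams n M) (lams n N) := by
  induction n with
  | zero => exact h
  | succ n ih => exact .abs ih

theorem FSteps.apps_ofFn {n : ℕ} (c : Fin n → ℕ) (u v : Fin n → LamF S)
    (h : ∀ i, FSteps (c i) (u i) (v i)) (M : LamF S) :
    FSteps (∑ i, c i) (apps M (List.ofFn u)) (apps M (List.ofFn v)) := by
  induction n generalizing M with
  | zero => simp [FSteps]
  | succ n ih =>
    rw [Fin.sum_univ_succ, List.ofFn_succ, List.ofFn_succ, apps_cons, apps_cons]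
    refine FSteps.trans ?_ (ih _ _ _ (fun i => h i.succ) _)
    exact (h 0).congr (fun X => apps (app M X) _) (fun _ _ h => (h.appR _).apps_left _)

/-- Random descent: the diamond property forces all F-reductions to the normal form to have the
same length. -/
theorem FSteps.descent {n : ℕ} {M N Q : LamF S} (h : FSteps n M N) (hN : NF N)
    (hQ : FStep M Q) : ∃ m, n = m + 1 ∧ FSteps m Q N := by
  induction n generalizing M Q with
  | zero =>
    cases (show M = N from h)
    exact absurd ⟨_, hQ⟩ hN
  | succ n ih =>
    obtain ⟨P, h1, h2⟩ := h
    rcases h1.diamond hQ with rfl | ⟨R, hR1, hR2⟩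
    · exact ⟨n, rfl, h2⟩
    · obtain ⟨m, rfl, hm⟩ := ih h2 hR1
      exact ⟨m + 1, rfl, R, hR2, hm⟩

/-- The leftmost strategy reaches an F-normal form in as many steps as any other F-reduction. -/
theorem FSteps.lSeq {n : ℕ} {M N : LamF S} (h : FSteps n M N) (hN : NF N) :
    LSeq M 0 n N := by
  induction n generalizing M with
  | zero => cases (show M = N from h); exact .refl _
  | succ n ih =>
    have hM : HasF M := by
      obtain ⟨P, h1, -⟩ := h
      exact ⟨P, h1⟩
    obtain ⟨Q, hQ⟩ := hM.exists_lfStep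
    obtain ⟨m, hm, h2⟩ := h.descent hN hQ.fStep
    obtain rfl : n = m := by omega
    exact .fstep hQ (ih h2)

/-! ### Leftmost reduction at the head -/

theorem LSeq.trans {M N P : LamF S} {b f b' f' : ℕ} (h : LSeq M b f N) (h' : LSeq N b' f' P) :
    LSeq M (b + b') (f + f') P := by
  induction h with
  | refl M => simpa using h'
  | fstep h1 _ ih =>
    rw [Nat.add_right_comm]
    exact .fstep h1 (ih h')
  | bstep hn h1 _ ih =>
    rw [Nat.add_right_comm]
    exact .bstep hn h1 (ih h')

theorem LBStep.apps_left {M N : LamF S} (L : List (LamF S)) (hM : ¬ IsAbs M) (h : LBStep M N) :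
    LBStep (apps M L) (apps N L) := by
  induction L generalizing M N with
  | nil => exact h
  | cons A L ih => exact ih id (.appL _ hM h)

theorem lSeq_beta {A B : LamF S} {L : List (LamF S)} (hA : NF A) (hB : NF B)
    (hL : ∀ C ∈ L, NF C) :
    LSeq (apps (app (lam A) B) L) 1 0 (apps (subst A 0 B) L) :=
  .bstep (nf_apps (nf_app (nf_lam hA) hB id) hL id)
    ((LBStep.beta A B).apps_left L id) (.refl _)

/-- The identity combinator. -/
def I : LamF S := lam (var 0)

theorem nf_I : NF (I : LamF S) := nf_lam (nf_var _)

theorem lSeq_I {B : LamF S} {L : List (LamF S)} (hB : NF B) (hL : ∀ C ∈ L, NF C) :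
    LSeq (apps (app I B) L) 1 0 (apps B L) := by
  have h := lSeq_beta (A := var 0) (nf_var _) hB hL
  rwa [show subst (var 0) 0 B = B by simp [subst]] at h

/-- `B` preceded by `n` identities, a delay of `n` β-steps. -/
def pad : ℕ → LamF S → LamF S
  | 0, B => B
  | n + 1, B => app I (pad n B)

theorem nf_pad {B : LamF S} (hB : NF B) (n : ℕ) : NF (pad n B) := by
  induction n with
  | zero => exact hB
  | succ n ih => exact nf_app nf_I ih id

theorem clo_pad {B : LamF S} {d : ℕ} (hB : Clo d B) (n : ℕ) : Clo d (pad n B) := by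
  induction n with
  | zero => exact hB
  | succ n ih => exact ⟨by simp [I, Clo], ih⟩

theorem subst_pad (B N : LamF S) (d n : ℕ) : subst (pad n B) d N = pad n (subst B d N) := by
  induction n with
  | zero => rfl
  | succ n ih => simp [pad, subst, ih, I]

theorem lSeq_pad {B : LamF S} {L : List (LamF S)} (hB : NF B) (hL : ∀ C ∈ L, NF C) (n : ℕ) :
    LSeq (apps (pad n B) L) n 0 (apps B L) := by
  induction n with
  | zero => exact .refl _
  | succ n ih =>
    have h := (lSeq_I (nf_pad hB n) hL).trans ih
    rwa [Nat.add_comm 1 n] at h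

/-- The case distinction `if r₁ then B₁ else if r₂ then B₂ else …`, for a list of pairs
`(rₛ, Bₛ)`. Each test costs three β-steps, and the delay put on each branch makes up for the later
tests that it skips. The identity in front of `rₛ` keeps a constant of `rₛ` from becoming the head
of an application to the branches. -/
def sel : List (LamF S × LamF S) → LamF S
  | [] => I
  | x :: l => app (app (app I x.1) (pad (3 * l.length) x.2)) (sel l)

theorem nf_sel {l : List (LamF S × LamF S)} (hl : ∀ x ∈ l, NF x.1 ∧ NF x.2) : NF (sel l) := by
  induction l with
  | nil => exact nf_I
  | cons x l ih =>
    have hx := hl x (by simp)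
    exact nf_app (nf_app (nf_app nf_I hx.1 id) (nf_pad hx.2 _) id)
      (ih fun y hy => hl y (by simp [hy])) id

theorem lSeq_sel {l : List (LamF S × LamF S)} (hl : ∀ x ∈ l, NF x.1 ∧ NF x.2)
    (hc : ∀ x ∈ l, Clo 0 x.2) (n : ℕ) (hn : n < l.length) (ht : l[n].1 = Ktrue)
    (hf : ∀ (m : ℕ) (hm : m < n), l[m].1 = Kfalse) :
    LSeq (sel l) (3 * l.length) 0 l[n].2 := by
  induction l generalizing n with
  | nil => simp at hn
  | cons x l ih =>
    have hx := hl x (by simp)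
    have hl' : ∀ y ∈ l, NF y.1 ∧ NF y.2 := fun y hy => hl y (by simp [hy])
    have hX : NF (pad (3 * l.length) x.2) := nf_pad hx.2 _
    have hXc : Clo 0 (pad (3 * l.length) x.2) := clo_pad (hc x (by simp)) _
    have hY := nf_sel hl'
    have e : 3 * (x :: l).length = 1 + 1 + 1 + 3 * l.length := by
      rw [List.length_cons]; ring
    have h1 : LSeq (sel (x :: l)) 1 0
        (apps x.1 [pad (3 * l.length) x.2, sel l]) :=
      lSeq_I (L := [pad (3 * l.length) x.2, sel l]) hx.1 (by simp [hX, hY])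
    rw [e]
    cases n with
    | zero =>
      have hx1 : x.1 = Ktrue := ht
      rw [hx1] at h1
      have h2 := lSeq_beta (A := lam (var 1)) (L := [sel l]) (nf_lam (nf_var 1)) hX
        (by simp [hY])
      have e2 : subst (lam (var 1)) 0 (pad (3 * l.length) x.2)
          = lam (pad (3 * l.length) x.2) := by
        simp [subst, hXc.lift_eq]
      rw [e2] at h2
      have h3 := lSeq_beta (L := []) hX hY (by simp)
      rw [hXc.subst_eq] at h3
      exact ((h1.trans h2).trans h3).trans (lSeq_pad (L := []) hx.2 (by simp) _)
    | succ n =>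
      have hx1 : x.1 = Kfalse := hf 0 (by omega)
      rw [hx1] at h1
      have h2 := lSeq_beta (A := lam (var 0)) (L := [sel l]) (nf_lam (nf_var 0)) hX
        (by simp [hY])
      have e2 : subst (lam (var 0)) 0 (pad (3 * l.length) x.2) = (I : LamF S) := by
        simp [subst, I]
      rw [e2] at h2
      have h3 := lSeq_I (L := []) hY (by simp)
      have h4 := ih hl' (fun y hy => hc y (by simp [hy])) n (by simpa using hn) ht
        (fun m hm => hf (m + 1) (by omega))
      exact ((h1.trans h2).trans h3).trans h4

end LamF

/-! ### Partial evaluation of good terms -/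

namespace Good

open LamF

variable {S : Sig} {k : ℕ} {Γ : Fin k → Dt}

/-- The variables of the good term are among the first `j` ones. -/
def Cl (j : ℕ) : {D : Dt} → Good S k Γ D → Prop
  | _, .var i => (i : ℕ) < j
  | _, .node _ args => ∀ i, (args i).Cl j

open Classical in
/-- The F-normal `Λ_F`-term obtained from a good term in the scope of `k` abstractions after the
first `j` of them have been applied to the encodings of `a 0, …, a (j-1)`. Subterms all of whose
variables have been instantiated are replaced by the encodings of their values. -/
noncomputable def pe (j : ℕ) (a : (i : Fin k) → (Γ i).carrier) :
    {D : Dt} → Good S k Γ D → LamF S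
  | _, .var i => if (i : ℕ) < j then enc (Γ i) (a i) else .var (k - 1 - i)
  | _, .node f args =>
      if ∀ i, (args i).Cl j then enc (S.cod f) (S.interp f fun i => (args i).eval a)
      else apps (.const f) (List.ofFn fun i => (args i).pe j a)

open Classical in
/-- The number of function symbols that become evaluable when the variable number `j` is
instantiated, all previous ones having been instantiated before. -/
noncomputable def cnt (j : ℕ) : {D : Dt} → Good S k Γ D → ℕ
  | _, .var _ => 0
  | _, .node _ args =>
      (∑ i, (args i).cnt j) +
        if (∀ i, (args i).Cl (j + 1)) ∧ ¬ ∀ i, (args i).Cl j then 1 else 0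

theorem Cl.mono {j j' : ℕ} (h : j ≤ j') {D : Dt} {t : Good S k Γ D} (ht : t.Cl j) :
    t.Cl j' := by
  induction t with
  | var i => exact lt_of_lt_of_le ht h
  | node f args ih => exact fun i => ih i (ht i)

theorem cl_all {D : Dt} (t : Good S k Γ D) : t.Cl k := by
  induction t with
  | var i => exact i.2
  | node f args ih => exact ih

theorem Cl.cnt_eq {j : ℕ} {D : Dt} {t : Good S k Γ D} (ht : t.Cl j) : t.cnt j = 0 := by
  induction t with
  | var i => rfl
  | node f args ih =>
    have ht' : ∀ i, (args i).Cl j := ht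
    simp [cnt, ht', fun i => ih i (ht i)]

theorem Cl.pe_eq {j : ℕ} {D : Dt} {t : Good S k Γ D} (ht : t.Cl j)
    (a : (i : Fin k) → (Γ i).carrier) : t.pe j a = enc D (t.eval a) := by
  cases t with
  | var i => exact if_pos ht
  | node f args => exact if_pos ht

theorem Cl.eval_congr {D : Dt} {t : Good S k Γ D} (ht : t.Cl 0)
    (a b : (i : Fin k) → (Γ i).carrier) : t.eval a = t.eval b := by
  induction t with
  | var i => exact absurd ht (Nat.not_lt_zero _)
  | node f args ih =>
    exact congrArg (S.interp f) (funext fun i => ih i (ht i))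

theorem pe_zero_congr {D : Dt} (t : Good S k Γ D) (a b : (i : Fin k) → (Γ i).carrier) :
    t.pe 0 a = t.pe 0 b := by
  induction t with
  | var i => simp [pe]
  | node f args ih =>
    by_cases h : ∀ i, (args i).Cl 0
    · have h' : (node f args).Cl 0 := h
      rw [h'.pe_eq, h'.pe_eq, h'.eval_congr a b]
    · simp only [pe, if_neg h, ih]

theorem clo_pe {j : ℕ} {D : Dt} (t : Good S k Γ D) (a : (i : Fin k) → (Γ i).carrier) :
    Clo (k - j) (t.pe j a) := by
  induction t with
  | var i =>
    simp only [pe]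
    split_ifs with h
    · exact (clo_enc _ _).mono (Nat.zero_le _)
    · have := i.2
      show k - 1 - (i : ℕ) < k - j
      omega
  | node f args ih =>
    simp only [pe]
    split_ifs with h
    · exact (clo_enc _ _).mono (Nat.zero_le _)
    · refine clo_apps trivial fun A hA => ?_
      obtain ⟨i, rfl⟩ := (List.mem_ofFn' _ _).1 hA
      exact ih i

theorem not_isAbs_pe {j : ℕ} {D : Dt} {t : Good S k Γ D} (a : (i : Fin k) → (Γ i).carrier)
    (ht : ¬ t.Cl j) : ¬ IsAbs (t.pe j a) := by
  cases t with
  | var i =>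
    have h : ¬ (i : ℕ) < j := ht
    simp [pe, h, IsAbs]
  | node f args =>
    have h : ¬ ∀ i, (args i).Cl j := ht
    simp only [pe, if_neg h]
    intro h'
    have hc : HeadConst (apps (.const f) (List.ofFn fun i => (args i).pe j a)) :=
      (headConst_apps _ _).2 trivial
    revert h' hc
    generalize apps (.const f) (List.ofFn fun i => (args i).pe j a) = M
    cases M <;> simp [IsAbs, HeadConst]

theorem nf_pe {j : ℕ} {D : Dt} (t : Good S k Γ D) (a : (i : Fin k) → (Γ i).carrier) :
    NF (t.pe j a) := by
  induction t with
  | var i =>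
    simp only [pe]
    split_ifs with h
    exacts [nf_enc _ _, nf_var _]
  | node f args ih =>
    by_cases h : ∀ i, (args i).Cl j
    · simp only [pe, if_pos h]
      exact nf_enc _ _
    · simp only [pe, if_neg h]
      rintro ⟨N, hN⟩
      rcases FStep.apps_const (by simp) hN with h' | ⟨A, hA, h'⟩
      · obtain ⟨b, hb, -⟩ := h'.inv
        push Not at h
        obtain ⟨i, hi⟩ := h
        refine not_isAbs_pe a hi ?_
        rw [congrFun (List.ofFn_injective hb) i]
        exact isAbs_enc _ _
      · obtain ⟨i, rfl⟩ := (List.mem_ofFn' _ _).1 hA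
        exact ih i h'

/-- Instantiating the next variable of a partially evaluated good term causes a number of F-steps
that does not depend on the value. -/
theorem fSteps_pe {j : ℕ} (hj : j < k) {D : Dt} (t : Good S k Γ D)
    (a : (i : Fin k) → (Γ i).carrier) :
    FSteps (t.cnt j) (subst (t.pe j a) (k - (j + 1)) (enc (Γ ⟨j, hj⟩) (a ⟨j, hj⟩)))
      (t.pe (j + 1) a) := by
  induction t with
  | var i =>
    show subst _ _ _ = _
    simp only [pe]
    by_cases h : (i : ℕ) < j
    · rw [if_pos h, if_pos (by omega)]
      exact ((clo_enc _ _).mono (Nat.zero_le _)).subst_eq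
    · rw [if_neg h]
      by_cases h2 : (i : ℕ) = j
      · obtain rfl : i = ⟨j, hj⟩ := Fin.ext h2
        rw [if_pos (by simp)]
        simp only [subst]
        rw [if_pos (by omega)]
      · have := i.2
        rw [if_neg (by omega)]
        simp only [subst]
        rw [if_neg (by omega), if_neg (by omega)]
  | node f args ih =>
    by_cases h : ∀ i, (args i).Cl j
    · have h0 : (node f args).Cl j := h
      rw [h0.cnt_eq, h0.pe_eq, (h0.mono (Nat.le_succ j)).pe_eq]
      exact ((clo_enc _ _).mono (Nat.zero_le _)).subst_eq
    · have h1 := FSteps.apps_ofFn _ _ _ ih (.const f)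
      simp only [pe, if_neg h, cnt, subst_apps, List.map_ofFn]
      by_cases h2 : ∀ i, (args i).Cl (j + 1)
      · rw [if_pos ⟨h2, h⟩, if_pos h2]
        refine FSteps.trans h1 ⟨_, ?_, rfl⟩
        have e : (fun i => (args i).pe (j + 1) a)
            = fun i => enc (S.dom f i) ((args i).eval a) :=
          funext fun i => (h2 i).pe_eq a
        rw [e]
        exact .ax (.intro f _)
      · rw [if_neg (fun h' => h2 h'.1), if_neg h2]
        exact h1

/-- Padding terms: `ω` iterated `m` times on a variable, its other arguments being constants. -/
theorem exists_pad {w : S.Sym} {i₀ : Fin (S.arity w)} (hw : S.cod w = S.dom w i₀)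
    (hν : ∀ j : Fin (S.arity w), ∃ c : S.Sym, S.arity c = 0 ∧ S.cod c = S.dom w j)
    {Γ : Fin 1 → Dt} (hΓ : Γ 0 = S.dom w i₀) (m : ℕ) :
    ∃ t : Good S 1 Γ (S.dom w i₀), t.cnt 0 = m ∧ ¬ t.Cl 0 := by
  have hcst : ∀ j, ∃ t : Good S 1 Γ (S.dom w j), t.Cl 0 := by
    intro j
    obtain ⟨c, hc, hcj⟩ := hν j
    rw [← hcj]
    exact ⟨.node c fun i => (Fin.cast hc i).elim0, fun i => (Fin.cast hc i).elim0⟩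
  choose cst hcst using hcst
  induction m with
  | zero =>
    rw [← hΓ]
    exact ⟨.var 0, rfl, Nat.not_lt_zero _⟩
  | succ m ih =>
    obtain ⟨t, ht, htc⟩ := ih
    let args : (i : Fin (S.arity w)) → Good S 1 Γ (S.dom w i) :=
      Function.update cst i₀ t
    have h0 : args i₀ = t := Function.update_self ..
    have hne : ∀ i, i ≠ i₀ → args i = cst i := fun i hi => Function.update_of_ne hi ..
    have hcl : ¬ ∀ i, (args i).Cl 0 := fun h => htc (h0 ▸ h i₀)
    have hsum : ∑ i, (args i).cnt 0 = m := by
      rw [Finset.sum_eq_single i₀]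
      · rw [h0, ht]
      · intro i _ hi
        rw [hne i hi, (hcst i).cnt_eq]
      · simp
    have key : ∃ t : Good S 1 Γ (S.cod w), t.cnt 0 = m + 1 ∧ ¬ t.Cl 0 := by
      refine ⟨.node w args, ?_, hcl⟩
      simp only [cnt]
      rw [hsum, if_pos ⟨fun i => cl_all _, hcl⟩]
    rwa [hw] at key

end Good

/-! ### Templates for the body of the recursive term -/

/-- Terms built by application from good terms, the identity combinator and a placeholder `self`
for the recursively defined term. -/
inductive Tpl (S : Sig) (k : ℕ) (Γ : Fin k → Dt) : Type
  | good {D : Dt} (t : Good S k Γ D) : Tpl S k Γ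
  | one : Tpl S k Γ
  | self : Tpl S k Γ
  | app (A B : Tpl S k Γ) : Tpl S k Γ

namespace Tpl

open LamF

variable {S : Sig} {k : ℕ} {Γ : Fin k → Dt}

/-- The `Λ_F`-term described by a template, with `h` for `self` and with the good terms partially
evaluated as in `Good.pe`. -/
noncomputable def tm (h : LamF S) (j : ℕ) (a : (i : Fin k) → (Γ i).carrier) :
    Tpl S k Γ → LamF S
  | good t => t.pe j a
  | one => I
  | self => h
  | app A B => .app (A.tm h j a) (B.tm h j a)

/-- The total of `Good.cnt` over the good terms of the template. -/
noncomputable def cnt (j : ℕ) : Tpl S k Γ → ℕ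
  | good t => t.cnt j
  | one => 0
  | self => 0
  | app A B => A.cnt j + B.cnt j

/-- The head of the template is not a good term. -/
def HeadOk : Tpl S k Γ → Prop
  | good _ => False
  | one => True
  | self => True
  | app A _ => A.HeadOk

/-- No good term of the template stands in function position. -/
def Ok : Tpl S k Γ → Prop
  | app A B => A.Ok ∧ B.Ok ∧ A.HeadOk
  | _ => True

theorem not_headConst_tm {h : LamF S} (hh : ¬ HeadConst h) {j : ℕ}
    {a : (i : Fin k) → (Γ i).carrier} {T : Tpl S k Γ} (hT : T.HeadOk) :
    ¬ HeadConst (T.tm h j a) := by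
  induction T with
  | good t => exact hT.elim
  | one => exact id
  | self => exact hh
  | app A B ihA _ => exact ihA hT

theorem nf_tm {h : LamF S} (hn : NF h) (hh : ¬ HeadConst h) {j : ℕ}
    {a : (i : Fin k) → (Γ i).carrier} {T : Tpl S k Γ} (hT : T.Ok) : NF (T.tm h j a) := by
  induction T with
  | good t => exact Good.nf_pe t a
  | one => exact nf_I
  | self => exact hn
  | app A B ihA ihB => exact nf_app (ihA hT.1) (ihB hT.2.1) (not_headConst_tm hh hT.2.2)

theorem clo_tm {h : LamF S} {d j : ℕ} (hd : k - j ≤ d) (hh : Clo d h)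
    (a : (i : Fin k) → (Γ i).carrier) (T : Tpl S k Γ) : Clo d (T.tm h j a) := by
  induction T with
  | good t => exact (Good.clo_pe t a).mono hd
  | one => exact Nat.succ_pos _
  | self => exact hh
  | app A B ihA ihB => exact ⟨ihA, ihB⟩

theorem tm_zero_congr (h : LamF S) (a b : (i : Fin k) → (Γ i).carrier) (T : Tpl S k Γ) :
    T.tm h 0 a = T.tm h 0 b := by
  induction T with
  | good t => exact t.pe_zero_congr a b
  | one => rfl
  | self => rfl
  | app A B ihA ihB => simp only [tm, ihA, ihB]

theorem subst_tm_zero (h N : LamF S) (a : (i : Fin k) → (Γ i).carrier) (T : Tpl S k Γ) :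
    subst (T.tm h 0 a) k N = T.tm (subst h k N) 0 a := by
  induction T with
  | good t => exact (Good.clo_pe (j := 0) t a).subst_eq
  | one => simp [tm, I, subst]
  | self => rfl
  | app A B ihA ihB => simp only [tm, subst, ihA, ihB]

theorem fSteps_tm {h : LamF S} (hh : Clo 0 h) {j : ℕ} (hj : j < k)
    (a : (i : Fin k) → (Γ i).carrier) (T : Tpl S k Γ) :
    FSteps (T.cnt j) (subst (T.tm h j a) (k - (j + 1)) (enc (Γ ⟨j, hj⟩) (a ⟨j, hj⟩)))
      (T.tm h (j + 1) a) := by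
  induction T with
  | good t => exact Good.fSteps_pe hj t a
  | one => simp [FSteps, cnt, tm, I, subst]
  | self => exact (hh.mono (Nat.zero_le _)).subst_eq
  | app A B ihA ihB =>
    exact (ihA.congr (fun X => .app X _) fun _ _ h => h.appL _).trans
      (ihB.congr (fun X => .app _ X) fun _ _ h => h.appR _)

/-- Applying the abstracted body to the encodings of `a 0, a 1, …` costs `k` β-steps and a number
of F-steps independent of `a`. -/
theorem lSeq_instantiate {h : LamF S} (hn : NF h) (hc : ¬ HeadConst h) (hh : Clo 0 h)
    (a : (i : Fin k) → (Γ i).carrier) {T : Tpl S k Γ} (hT : T.Ok) :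
    LSeq (apps (lams k (T.tm h 0 a)) (List.ofFn fun i => enc (Γ i) (a i)))
      k (∑ j ∈ Finset.range k, T.cnt j) (T.tm h k a) := by
  set A : List (LamF S) := List.ofFn fun i => enc (Γ i) (a i) with hA
  have hlen : A.length = k := by simp [hA]
  have hAn : ∀ C ∈ A, NF C := by
    intro C hC
    obtain ⟨i, rfl⟩ := (List.mem_ofFn' _ _).1 hC
    exact nf_enc _ _
  have key : ∀ j, j ≤ k → LSeq (apps (lams k (T.tm h 0 a)) A) j
      (∑ i ∈ Finset.range j, T.cnt i) (apps (lams (k - j) (T.tm h j a)) (A.drop j)) := by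
    intro j
    induction j with
    | zero => intro _; exact .refl _
    | succ j ih =>
      intro hj
      have hj' : j < k := hj
      have hdrop : A.drop j = enc (Γ ⟨j, hj'⟩) (a ⟨j, hj'⟩) :: A.drop (j + 1) := by
        rw [List.drop_eq_getElem_cons (by omega)]
        simp [hA]
      have hD : ∀ C ∈ A.drop (j + 1), NF C := fun C hC => hAn C (List.mem_of_mem_drop hC)
      have h1 := ih (by omega)
      have e : k - j = (k - (j + 1)) + 1 := by omega
      rw [hdrop, e, apps_cons] at h1
      have h2 := lSeq_beta (A := lams (k - (j + 1)) (T.tm h j a)) (nf_lams (nf_tm hn hc hT))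
        (nf_enc (Γ ⟨j, hj'⟩) (a ⟨j, hj'⟩)) hD
      rw [subst_lams (clo_enc _ _), Nat.zero_add] at h2
      have h3 := (fSteps_tm hh hj' a T).congr
        (fun X => apps (lams (k - (j + 1)) X) (A.drop (j + 1)))
        (fun _ _ h => (h.lams _).apps_left _)
      -- The result is F-normal: only when all abstractions are consumed may its head be a
      -- constant, and then no arguments are left.
      have hnf : NF (apps (lams (k - (j + 1)) (T.tm h (j + 1) a)) (A.drop (j + 1))) := by
        rcases Nat.eq_zero_or_pos (k - (j + 1)) with h0 | h0
        · rw [List.drop_eq_nil_of_le (by omega)]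
          exact nf_lams (nf_tm hn hc hT)
        · refine nf_apps (nf_lams (nf_tm hn hc hT)) hD ?_
          obtain ⟨r, hr⟩ := Nat.exists_eq_succ_of_ne_zero h0.ne'
          rw [hr]
          exact id
      have h4 := (h1.trans h2).trans (h3.lSeq hnf)
      rw [Finset.sum_range_succ]
      exact h4
  have := key k le_rfl
  rwa [Nat.sub_self, List.drop_eq_nil_of_le hlen.le] at this

/-- The template counterpart of `LamF.pad`. -/
def pad : ℕ → Tpl S k Γ → Tpl S k Γ
  | 0, B => B
  | n + 1, B => app one (pad n B)

/-- The template counterpart of `LamF.sel`. -/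
def sel : List (Tpl S k Γ × Tpl S k Γ) → Tpl S k Γ
  | [] => one
  | x :: l => app (app (app one x.1) (pad (3 * l.length) x.2)) (sel l)

/-- The template counterpart of `LamF.apps`. -/
def apps : Tpl S k Γ → List (Tpl S k Γ) → Tpl S k Γ := List.foldl app

theorem tm_pad (h : LamF S) (j : ℕ) (a : (i : Fin k) → (Γ i).carrier) (n : ℕ)
    (B : Tpl S k Γ) : (pad n B).tm h j a = LamF.pad n (B.tm h j a) := by
  induction n with
  | zero => rfl
  | succ n ih => simp only [pad, tm, LamF.pad, ih]

theorem tm_sel (h : LamF S) (j : ℕ) (a : (i : Fin k) → (Γ i).carrier)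
    (l : List (Tpl S k Γ × Tpl S k Γ)) :
    (sel l).tm h j a = LamF.sel (l.map fun x => (x.1.tm h j a, x.2.tm h j a)) := by
  induction l with
  | nil => rfl
  | cons x l ih =>
    simp only [sel, tm, LamF.sel, List.map_cons, List.length_map, tm_pad, ih]

theorem tm_apps (h : LamF S) (j : ℕ) (a : (i : Fin k) → (Γ i).carrier) (A : Tpl S k Γ)
    (l : List (Tpl S k Γ)) :
    (apps A l).tm h j a = LamF.apps (A.tm h j a) (l.map fun B => B.tm h j a) := by
  induction l generalizing A with
  | nil => rfl
  | cons B l ih => exact ih (app A B)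

theorem ok_pad {B : Tpl S k Γ} (hB : B.Ok) (n : ℕ) : (pad n B).Ok := by
  induction n with
  | zero => exact hB
  | succ n ih => exact ⟨trivial, ih, trivial⟩

theorem ok_sel {l : List (Tpl S k Γ × Tpl S k Γ)} (hl : ∀ x ∈ l, x.1.Ok ∧ x.2.Ok) :
    (sel l).Ok := by
  induction l with
  | nil => trivial
  | cons x l ih =>
    have hx := hl x (by simp)
    exact ⟨⟨⟨trivial, hx.1, trivial⟩, ok_pad hx.2 _, trivial⟩,
      ih fun y hy => hl y (by simp [hy]), trivial⟩

theorem ok_apps {A : Tpl S k Γ} (hA : A.Ok) (hA' : A.HeadOk) {l : List (Tpl S k Γ)}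
    (hl : ∀ B ∈ l, B.Ok) : (apps A l).Ok := by
  induction l generalizing A with
  | nil => exact hA
  | cons B l ih =>
    exact ih (A := app A B) ⟨hA, hl B (by simp), hA'⟩ hA' fun C hC => hl C (by simp [hC])

/-- Existence of a recursive term: for a template `T`, some closed `θ` turns `θ ⌜a₁⌝ ⋯ ⌜a_k⌝`
into the fully evaluated instance of `T` with `θ` for `self`. The cost does not depend on `a`, and
can be any prescribed one that is large enough. -/
theorem exists_rec (hS : S.PadAssump) {T : Tpl S k Γ} (hT : T.Ok) (n m : ℕ) :
    ∃ θ : LamF S, NF θ ∧ ¬ HeadConst θ ∧ Clo 0 θ ∧ ∀ a : (i : Fin k) → (Γ i).carrier,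
      LSeq (LamF.apps θ (List.ofFn fun i => enc (Γ i) (a i)))
        (4 + n + k) (m + ∑ j ∈ Finset.range k, T.cnt j) (T.tm θ k a) := by
  obtain ⟨w, -, ⟨i₀, hw⟩, hν⟩ := hS
  have dflt : ∀ D : Dt, D.carrier := fun D =>
    match D with
    | .nat => (0 : ℕ)
    | .bool => true
  obtain ⟨t, ht, -⟩ := Good.exists_pad hw hν (Γ := fun _ => S.dom w i₀) rfl m
  set b : (i : Fin 1) → Dt.carrier ((fun _ => S.dom w i₀) i) := fun _ => dflt _ with hb
  -- `P` reduces to `I` in two β-steps, between which exactly `m` F-steps take place.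
  set V : LamF S := enc (S.dom w i₀) (dflt _) with hV
  set P : LamF S := .app (.lam (.app (.lam I) (t.pe 0 b))) V with hP
  -- `θ = W W` unfolds to `n` identities, then `P`, then the body, in which the variable `k`
  -- applied to itself stands for `θ`. At stage `0` the values of the variables are irrelevant.
  set T₀ : LamF S := T.tm (.app (.var k) (.var k)) 0 fun i => dflt (Γ i) with hT₀
  set W : LamF S := .lam (LamF.pad n (.app P (lams k T₀))) with hW
  have hVn : NF V := nf_enc _ _
  have hZn : NF (.app (.lam I) (t.pe 0 b)) := nf_app (nf_lam nf_I) (t.nf_pe b) id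
  have hPn : NF P := nf_app (nf_lam hZn) hVn id
  have hPc : Clo 0 P :=
    And.intro (show Clo 1 _ ∧ Clo 1 _ from ⟨by simp [I, Clo], Good.clo_pe (j := 0) t b⟩)
      (clo_enc _ _)
  have hT₀n : NF T₀ := nf_tm (nf_app (nf_var _) (nf_var _) id) id hT
  have hT₀c : Clo (1 + k) T₀ :=
    clo_tm (by omega) (by simp [Clo]) _ T
  have hBn : NF (LamF.pad n (.app P (lams k T₀))) := nf_pad (nf_app hPn (nf_lams hT₀n) id) n
  have hWn : NF W := nf_lam hBn
  have hWc : Clo 0 W :=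
    clo_pad (d := 1) (B := .app P (lams k T₀)) ⟨hPc.mono (by omega), clo_lams hT₀c⟩ n
  have hθn : NF (.app W W) := nf_app hWn hWn id
  refine ⟨.app W W, hθn, id, ⟨hWc, hWc⟩, fun a => ?_⟩
  set A : List (LamF S) := List.ofFn fun i => enc (Γ i) (a i) with hA
  have hAn : ∀ C ∈ A, NF C := by
    intro C hC
    obtain ⟨i, rfl⟩ := (List.mem_ofFn' _ _).1 hC
    exact nf_enc _ _
  set G : LamF S := lams k (T.tm (.app W W) 0 a) with hG
  have hGn : NF G := nf_lams (nf_tm hθn id hT)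
  have hGA : ∀ C ∈ G :: A, NF C := by
    intro C hC
    rcases List.mem_cons.1 hC with rfl | hC
    exacts [hGn, hAn C hC]
  have h1 := lSeq_beta hBn hWn hAn
  have e1 : subst (LamF.pad n (.app P (lams k T₀))) 0 W = LamF.pad n (.app P G) := by
    rw [subst_pad]
    simp only [subst]
    rw [hPc.subst_eq, subst_lams hWc, Nat.zero_add, hT₀, subst_tm_zero,
      tm_zero_congr _ _ a, hG]
    simp [subst]
  rw [e1] at h1
  have h2 := lSeq_pad (nf_app hPn hGn id) hAn n
  have h3 := lSeq_beta hZn hVn hGA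
  have e3 : subst (.app (.lam I) (t.pe 0 b)) 0 V
      = .app (.lam I) (subst (t.pe 0 b) 0 V) := by
    simp [subst, I]
  rw [e3] at h3
  have h4 : LSeq (LamF.apps (.app (.lam I) (subst (t.pe 0 b) 0 V)) (G :: A)) 0 m
      (LamF.apps (.app (.lam I) (t.pe 1 b)) (G :: A)) := by
    have h := (t.fSteps_pe (j := 0) Nat.one_pos b).congr
      (fun X => LamF.apps (.app (.lam I) X) (G :: A)) (fun _ _ h => (h.appR _).apps_left _)
    rw [ht] at h
    exact h.lSeq (nf_apps (nf_app (nf_lam nf_I) (t.nf_pe b) id) hGA id)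
  have h5 := lSeq_beta nf_I (t.nf_pe (j := 1) b) hGA
  have e5 : subst (I : LamF S) 0 (t.pe 1 b) = I := by simp [subst, I]
  rw [e5] at h5
  have h6 := lSeq_I hGn hAn
  have h7 := lSeq_instantiate (h := .app W W) hθn id ⟨hWc, hWc⟩ a hT
  have hall := h1.trans (h2.trans (h3.trans (h4.trans (h5.trans (h6.trans h7)))))
  have eb : 1 + (n + (1 + (0 + (1 + (1 + k))))) = 4 + n + k := by ring
  have ef : 0 + (0 + (0 + (m + (0 + (0 + ∑ j ∈ Finset.range k, T.cnt j)))))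
      = m + ∑ j ∈ Finset.range k, T.cnt j := by ring
  rw [eb, ef] at hall
  exact hall

end Tpl

/-- Constant-cost conditional updates: under the leftmost reduction strategy, the term θ
applied to the encodings of a state performs, at a cost of exactly K β-reductions and
L F-reductions, the block of updates (or produces the output) selected by the first
condition ρ_s that evaluates to True. -/
theorem constant_cost_conditional_updates (S : Sig) (hS : S.PadAssump)
    (k : ℕ) (Δ : Fin k → Dt) (p q : ℕ)
    (ρ : Fin (p + q) → Good S k Δ .bool)
    (φ : Fin p → (j : Fin k) → Good S k Δ (Δ j))
    (E : Fin q → Dt) (γ : (l : Fin q) → Good S k Δ (E l)) :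
    ∃ Kmin Lmin : ℕ, ∀ K L : ℕ, Kmin ≤ K → Lmin ≤ L →
      ∃ θ : LamF S, ∀ (a : (i : Fin k) → (Δ i).carrier) (s : Fin (p + q)),
        (ρ s).eval a = true →
        (∀ t : Fin (p + q), t < s → (ρ t).eval a = false) →
        (∀ hs : (s : ℕ) < p,
          LamF.LSeq (LamF.apps θ (List.ofFn fun i => LamF.enc (Δ i) (a i))) K L
            (LamF.apps θ (List.ofFn fun j => LamF.enc (Δ j) ((φ ⟨s, hs⟩ j).eval a)))) ∧
        (∀ l : Fin q, (s : ℕ) = p + (l : ℕ) →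
          LamF.LSeq (LamF.apps θ (List.ofFn fun i => LamF.enc (Δ i) (a i))) K L
            (LamF.enc (E l) ((γ l).eval a))) := by
  classical
  let B : Fin (p + q) → Tpl S k Δ := fun s =>
    if hs : (s : ℕ) < p then Tpl.apps .self (List.ofFn fun j => .good (φ ⟨s, hs⟩ j))
    else .good (γ ⟨s - p, by omega⟩)
  let l : List (Tpl S k Δ × Tpl S k Δ) := List.ofFn fun s => (.good (ρ s), B s)
  have hB : ∀ s, (B s).Ok := by
    intro s
    simp only [B]
    split_ifs with hs
    · refine Tpl.ok_apps (A := .self) trivial trivial fun C hC => ?_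
      obtain ⟨i, rfl⟩ := (List.mem_ofFn' _ _).1 hC
      trivial
    · trivial
  have hl : ∀ x ∈ l, x.1.Ok ∧ x.2.Ok := by
    intro x hx
    obtain ⟨s, rfl⟩ := (List.mem_ofFn' _ _).1 hx
    exact ⟨trivial, hB s⟩
  refine ⟨4 + k + 3 * (p + q), ∑ j ∈ Finset.range k, (Tpl.sel l).cnt j,
    fun K L hK hL => ?_⟩
  obtain ⟨n, rfl⟩ := Nat.exists_eq_add_of_le hK
  obtain ⟨m, rfl⟩ := Nat.exists_eq_add_of_le hL
  obtain ⟨θ, hn, hh, hc, hθ⟩ := Tpl.exists_rec hS (Tpl.ok_sel hl) n m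
  refine ⟨θ, fun a s hs hlt => ?_⟩
  have hgood : ∀ {D : Dt} (t : Good S k Δ D), t.pe k a = LamF.enc D (t.eval a) :=
    fun t => t.cl_all.pe_eq a
  have h1 := hθ a
  rw [Tpl.tm_sel] at h1
  have h2 := LamF.lSeq_sel (l := l.map fun x => (x.1.tm θ k a, x.2.tm θ k a))
    (by
      intro y hy
      obtain ⟨x, hx, rfl⟩ := List.mem_map.1 hy
      exact ⟨Tpl.nf_tm hn hh (hl x hx).1, Tpl.nf_tm hn hh (hl x hx).2⟩)
    (by
      intro y hy
      obtain ⟨x, hx, rfl⟩ := List.mem_map.1 hy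
      exact Tpl.clo_tm (by simp) hc a _)
    s (by simp [l])
    (by
      simp only [l, List.getElem_map, List.getElem_ofFn, Tpl.tm, Fin.eta]
      rw [hgood, hs]; rfl)
    (by
      intro r hr
      simp only [l, List.getElem_map, List.getElem_ofFn, Tpl.tm]
      rw [hgood, hlt ⟨r, by omega⟩ hr]; rfl)
  have h3 := h1.trans h2
  simp only [l, List.length_map, List.length_ofFn, List.getElem_map, List.getElem_ofFn,
    Fin.eta] at h3
  have eb : 4 + n + k + 3 * (p + q) = 4 + k + 3 * (p + q) + n := by ring
  rw [eb, Nat.add_zero, Nat.add_comm m] at h3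
  constructor
  · intro hsp
    have e : (B s).tm θ k a
        = LamF.apps θ (List.ofFn fun j => LamF.enc (Δ j) ((φ ⟨s, hsp⟩ j).eval a)) := by
      simp only [B, dif_pos hsp, Tpl.tm_apps, List.map_ofFn]
      congr 2
      funext j
      exact hgood _
    rw [e] at h3
    exact h3
  · intro i hi
    have e : (B s).tm θ k a = LamF.enc (E i) ((γ i).eval a) := by
      have hsp : ¬ (s : ℕ) < p := by omega
      have hi' : (⟨s - p, by omega⟩ : Fin q) = i := Fin.ext (by simp [hi])
      simp only [B, dif_neg hsp, Tpl.tm]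
      have h : ∀ i', i' = i → (γ i').pe k a = LamF.enc (E i) ((γ i).eval a) := by
        rintro _ rfl
        exact hgood _
      exact h _ hi'
    rw [e] at h3
    exact h3
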